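/- Let C be a group system. For every t ∈ ℤ, X_0^t and Y_0^t are normal subgroups of the branch group B^t, and there are isomorphisms B^t/X_0^t ≅ Σ^t and B^t/Y_0^t ≅ Σ^{t+1}. In particular, for every t ∈ ℤ there is a state group isomorphism B^t/Y_0^t ≅ B^{t+1}/X_0^{t+1}. -/

import Mathlib

open scoped Pointwise

namespace GroupSystemPaper

variable {A : ℤ → Type*} [∀ t, Group (A t)]

/-- `C^{t+}` : codewords of the group system `C` that are the identity before time `t`. -/
def Cplus (C : Subgroup (∀ t, A t)) (t : ℤ) : Subgroup C where
  carrier := {a | ∀ n < t, (a : ∀ s, A s) n = 1}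
  one_mem' := by intro n hn; simp
  mul_mem' := by intro a b ha hb n hn; simp [ha n hn, hb n hn]
  inv_mem' := by intro a ha n hn; simp [ha n hn]

/-- `C^{t−}` : codewords of the group system `C` that are the identity from time `t` on. -/
def Cminus (C : Subgroup (∀ t, A t)) (t : ℤ) : Subgroup C where
  carrier := {a | ∀ n, t ≤ n → (a : ∀ s, A s) n = 1}
  one_mem' := by intro n hn; simp
  mul_mem' := by intro a b ha hb n hn; simp [ha n hn, hb n hn]
  inv_mem' := by intro a ha n hn; simp [ha n hn]

/-- `C^{[t₁,t₂]}` : codewords supported on the interval `[t₁, t₂]`. -/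
def Cint (C : Subgroup (∀ t, A t)) (t₁ t₂ : ℤ) : Subgroup C :=
  Cplus C t₁ ⊓ Cminus C (t₂ + 1)

instance Cplus_normal (C : Subgroup (∀ t, A t)) (t : ℤ) : (Cplus C t).Normal := by
  constructor
  intro x hx g n hn
  have h1 : (x : ∀ s, A s) n = 1 := hx n hn
  simp [h1]

instance Cminus_normal (C : Subgroup (∀ t, A t)) (t : ℤ) : (Cminus C t).Normal := by
  constructor
  intro x hx g n hn
  have h1 : (x : ∀ s, A s) n = 1 := hx n hn
  simp [h1]

instance Cint_normal (C : Subgroup (∀ t, A t)) (t₁ t₂ : ℤ) : (Cint C t₁ t₂).Normal := by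
  constructor
  intro x hx g
  rcases Subgroup.mem_inf.mp hx with ⟨h1, h2⟩
  exact Subgroup.mem_inf.mpr
    ⟨(Cplus_normal C t₁).conj_mem _ h1 g, (Cminus_normal C (t₂ + 1)).conj_mem _ h2 g⟩

/-- The normal subgroup `C^{t−}C^{t+}` of `C`. -/
def stateN (C : Subgroup (∀ t, A t)) (t : ℤ) : Subgroup C :=
  Cminus C t ⊔ Cplus C t

instance stateN_normal (C : Subgroup (∀ t, A t)) (t : ℤ) : (stateN C t).Normal :=
  Subgroup.sup_normal _ _

/-- The canonical state space `Σ^t = C/(C^{t−}C^{t+})`. -/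
abbrev State (C : Subgroup (∀ t, A t)) (t : ℤ) : Type _ :=
  ↥C ⧸ stateN C t

/-- The state projection `σ^t : C → Σ^t`. -/
def sigma (C : Subgroup (∀ t, A t)) (t : ℤ) : ↥C →* State C t :=
  QuotientGroup.mk' (stateN C t)

/-- The evaluation homomorphism `χ^t : C → A^t`. -/
def evalHom (C : Subgroup (∀ t, A t)) (t : ℤ) : ↥C →* A t :=
  (Pi.evalMonoidHom A t).comp C.subtype

/-- The branch homomorphism `β^t : C → Σ^t × A^t × Σ^{t+1}`. -/
def beta (C : Subgroup (∀ t, A t)) (t : ℤ) :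
    ↥C →* State C t × A t × State C (t + 1) :=
  (sigma C t).prod ((evalHom C t).prod (sigma C (t + 1)))

/-- The branch group `B^t = β^t(C)`. -/
def Branch (C : Subgroup (∀ t, A t)) (t : ℤ) :
    Subgroup (State C t × A t × State C (t + 1)) :=
  (beta C t).range

/-- `β^t` with codomain restricted to the branch group `B^t`. -/
def betaRes (C : Subgroup (∀ t, A t)) (t : ℤ) : ↥C →* ↥(Branch C t) :=
  (beta C t).rangeRestrict

/-- `X_j^t = β^t(C^{(t−j)+})` as a subgroup of the branch group `B^t`. -/
def X (C : Subgroup (∀ t, A t)) (j t : ℤ) : Subgroup ↥(Branch C t) :=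
  (Cplus C (t - j)).map (betaRes C t)

/-- `Y_i^t = β^t(C^{(t+i+1)−})` as a subgroup of the branch group `B^t`. -/
def Y (C : Subgroup (∀ t, A t)) (i t : ℤ) : Subgroup ↥(Branch C t) :=
  (Cminus C (t + i + 1)).map (betaRes C t)

instance X_normal (C : Subgroup (∀ t, A t)) (j t : ℤ) : (X C j t).Normal :=
  (Cplus_normal C (t - j)).map _ (MonoidHom.rangeRestrict_surjective _)

instance Y_normal (C : Subgroup (∀ t, A t)) (i t : ℤ) : (Y C i t).Normal :=
  (Cminus_normal C (t + i + 1)).map _ (MonoidHom.rangeRestrict_surjective _)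

/-- `Δ_k^t = X_0^t ∩ Y_k^t`. -/
def Del (C : Subgroup (∀ t, A t)) (k t : ℤ) : Subgroup ↥(Branch C t) :=
  X C 0 t ⊓ Y C k t

/-- `D_k^t = {a ∈ C : β^t(a) ∈ Δ_k^t}`. -/
def D (C : Subgroup (∀ t, A t)) (k t : ℤ) : Subgroup ↥C :=
  (Del C k t).comap (betaRes C t)

/-- Following-branch operator: for `S ⊆ B^{t₁}`,
`FSet C t₁ t₂ S = {β^{t₂}(a) : a ∈ C, β^{t₁}(a) ∈ S}`. -/
def FSet (C : Subgroup (∀ t, A t)) (t₁ t₂ : ℤ) (S : Set ↥(Branch C t₁)) :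
    Set ↥(Branch C t₂) :=
  {x | ∃ a : ↥C, betaRes C t₁ a ∈ S ∧ betaRes C t₂ a = x}

/-- `π^{[t,t+k]} : C → B^t × ⋯ × B^{t+k}`, `a ↦ (β^t(a), …, β^{t+k}(a))`. -/
def piSeg (C : Subgroup (∀ t, A t)) (t : ℤ) (k : ℕ) :
    ↥C →* ∀ j : Fin (k + 1), ↥(Branch C (t + ((j : ℕ) : ℤ))) where
  toFun a := fun j => betaRes C (t + ((j : ℕ) : ℤ)) a
  map_one' := by funext j; simp
  map_mul' a b := by funext j; simp

/-- `π^{[t,t+k]}(D_m^t)`. -/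
def Pseg (C : Subgroup (∀ t, A t)) (t : ℤ) (k : ℕ) (m : ℤ) :
    Subgroup (∀ j : Fin (k + 1), ↥(Branch C (t + ((j : ℕ) : ℤ)))) :=
  (D C m t).map (piSeg C t k)

/-- `β^{t+j}(D_m^t)` : the image of `D_m^t` in the branch group at time `t + j`. -/
def Qb (C : Subgroup (∀ t, A t)) (t m j : ℤ) : Subgroup ↥(Branch C (t + j)) :=
  (D C m t).map (betaRes C (t + j))

/-- The normal subgroup `C^{[t,t+k−1]}C^{[t+1,t+k]}` of `C` (denominator of the granule). -/
def granN (C : Subgroup (∀ t, A t)) (t : ℤ) (k : ℕ) : Subgroup ↥C :=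
  Cint C t (t + k - 1) ⊔ Cint C (t + 1) (t + k)

instance granN_normal (C : Subgroup (∀ t, A t)) (t : ℤ) (k : ℕ) : (granN C t k).Normal :=
  Subgroup.sup_normal _ _

lemma mem_D_of_mem_Cint (C : Subgroup (∀ t, A t)) (t : ℤ) (k : ℕ) {a : ↥C}
    (ha : a ∈ Cint C t (t + k)) : a ∈ D C (k : ℤ) t := by
  rcases Subgroup.mem_inf.mp ha with ⟨h1, h2⟩
  refine Subgroup.mem_comap.mpr (Subgroup.mem_inf.mpr ⟨?_, ?_⟩)
  · exact Subgroup.mem_map.mpr ⟨a, by simpa using h1, rfl⟩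
  · exact Subgroup.mem_map.mpr ⟨a, h2, rfl⟩

/-- `ℓ`-controllability of the group system `C`. -/
def Controllable (C : Subgroup (∀ t, A t)) (ℓ : ℕ) : Prop :=
  ∀ a b : ↥C, ∀ t : ℤ, ∃ c : ↥C,
    (∀ n < t, (c : ∀ s, A s) n = (a : ∀ s, A s) n) ∧
    (∀ n, t + (ℓ : ℤ) ≤ n → (c : ∀ s, A s) n = (b : ∀ s, A s) n)

/-!
A codeword in `C^{t−}` or in `C^{(t+1)+}` has trivial branch at time `t`. Hence `β^t` sends
`C^{t+}` onto the same subgroup as the whole of `C^{t−}C^{t+}`, which is the kernel of `σ^t`, so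
`X_0^t` is exactly the set of branches whose initial state is trivial. Symmetrically `Y_0^t` is
the set of branches whose final state is trivial. The isomorphisms are then the first
isomorphism theorem for the two surjections `B^t → Σ^t` and `B^t → Σ^{t+1}`.
-/

lemma map_eq_ker_of_sup_eq_ker_comp {G H K : Type*} [Group G] [Group H] [Group K]
    {f : G →* H} {g : H →* K} {M N : Subgroup G} (hf : Function.Surjective f) (hM : M ≤ f.ker)
    (hMN : M ⊔ N = (g.comp f).ker) : N.map f = g.ker :=
  calc
    N.map f = (M ⊔ N).map f := by
      rw [Subgroup.map_sup, (Subgroup.map_eq_bot_iff M).2 hM, bot_sup_eq]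
    _ = (g.ker.comap f).map f := by rw [hMN, MonoidHom.comap_ker]
    _ = g.ker := Subgroup.map_comap_eq_self_of_surjective hf g.ker

section BranchStates

variable (C : Subgroup (∀ t, A t)) (t : ℤ)

lemma Cplus_antitone : Antitone (Cplus C) :=
  fun _ _ hst _ ha n hn => ha n (hn.trans_le hst)

lemma Cminus_monotone : Monotone (Cminus C) :=
  fun _ _ hst _ ha n hn => ha n (hst.trans hn)

lemma sigma_surjective : Function.Surjective (sigma C t) :=
  QuotientGroup.mk'_surjective _

lemma ker_sigma : (sigma C t).ker = stateN C t :=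
  QuotientGroup.ker_mk' _

lemma betaRes_surjective : Function.Surjective (betaRes C t) :=
  MonoidHom.rangeRestrict_surjective _

lemma ker_betaRes :
    (betaRes C t).ker = stateN C t ⊓ ((evalHom C t).ker ⊓ stateN C (t + 1)) := by
  calc
    (betaRes C t).ker = (beta C t).ker := MonoidHom.ker_rangeRestrict _
    _ = stateN C t ⊓ ((evalHom C t).ker ⊓ stateN C (t + 1)) := by
      rw [beta, MonoidHom.ker_prod, MonoidHom.ker_prod, ker_sigma, ker_sigma]

lemma Cminus_le_ker_betaRes : Cminus C t ≤ (betaRes C t).ker := by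
  have le_ker_evalHom : Cminus C t ≤ (evalHom C t).ker := fun _ ha => ha t le_rfl
  have le_stateN_succ : Cminus C t ≤ stateN C (t + 1) :=
    (Cminus_monotone C (Int.le_add_one le_rfl)).trans le_sup_left
  rw [ker_betaRes]
  exact le_inf le_sup_left (le_inf le_ker_evalHom le_stateN_succ)

lemma Cplus_succ_le_ker_betaRes : Cplus C (t + 1) ≤ (betaRes C t).ker := by
  have le_stateN : Cplus C (t + 1) ≤ stateN C t :=
    (Cplus_antitone C (Int.le_add_one le_rfl)).trans le_sup_right
  have le_ker_evalHom : Cplus C (t + 1) ≤ (evalHom C t).ker := fun _ ha => ha t (Int.lt_succ t)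
  rw [ker_betaRes]
  exact le_inf le_stateN (le_inf le_ker_evalHom le_sup_right)

/-- The projection `B^t → Σ^t` of a branch to its initial state. -/
def leftState : ↥(Branch C t) →* State C t :=
  (MonoidHom.fst _ _).comp (Branch C t).subtype

/-- The projection `B^t → Σ^{t+1}` of a branch to its final state. -/
def rightState : ↥(Branch C t) →* State C (t + 1) :=
  ((MonoidHom.snd _ _).comp (MonoidHom.snd _ _)).comp (Branch C t).subtype

lemma leftState_comp_betaRes : (leftState C t).comp (betaRes C t) = sigma C t := rfl

lemma rightState_comp_betaRes : (rightState C t).comp (betaRes C t) = sigma C (t + 1) := rfl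

lemma leftState_surjective : Function.Surjective (leftState C t) :=
  .of_comp (g := betaRes C t) (sigma_surjective C t)

lemma rightState_surjective : Function.Surjective (rightState C t) :=
  .of_comp (g := betaRes C t) (sigma_surjective C (t + 1))

lemma X_zero_eq_ker_leftState : X C 0 t = (leftState C t).ker := by
  have sup_eq : Cminus C t ⊔ Cplus C t = ((leftState C t).comp (betaRes C t)).ker := by
    rw [leftState_comp_betaRes, ker_sigma, stateN]
  rw [X, sub_zero]
  exact map_eq_ker_of_sup_eq_ker_comp (betaRes_surjective C t) (Cminus_le_ker_betaRes C t) sup_eq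

lemma Y_zero_eq_ker_rightState : Y C 0 t = (rightState C t).ker := by
  have sup_eq :
      Cplus C (t + 1) ⊔ Cminus C (t + 1) = ((rightState C t).comp (betaRes C t)).ker := by
    rw [rightState_comp_betaRes, ker_sigma, stateN, sup_comm]
  rw [Y, add_zero]
  exact map_eq_ker_of_sup_eq_ker_comp (betaRes_surjective C t) (Cplus_succ_le_ker_betaRes C t)
    sup_eq

/-- The isomorphism `B^t/X_0^t ≅ Σ^t` induced by the initial state of a branch. -/
noncomputable def quotientXEquivState : (↥(Branch C t) ⧸ X C 0 t) ≃* State C t :=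
  (QuotientGroup.quotientMulEquivOfEq (X_zero_eq_ker_leftState C t)).trans
    (QuotientGroup.quotientKerEquivOfSurjective _ (leftState_surjective C t))

/-- The isomorphism `B^t/Y_0^t ≅ Σ^{t+1}` induced by the final state of a branch. -/
noncomputable def quotientYEquivState : (↥(Branch C t) ⧸ Y C 0 t) ≃* State C (t + 1) :=
  (QuotientGroup.quotientMulEquivOfEq (Y_zero_eq_ker_rightState C t)).trans
    (QuotientGroup.quotientKerEquivOfSurjective _ (rightState_surjective C t))

end BranchStates

/-- `X_0^t` and `Y_0^t` are normal in `B^t`, with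
`B^t/X_0^t ≅ Σ^t` and `B^t/Y_0^t ≅ Σ^{t+1}`; in particular
`B^t/Y_0^t ≅ B^{t+1}/X_0^{t+1}`. -/
theorem statement6 (C : Subgroup (∀ t, A t)) (t : ℤ) :
    (X C 0 t).Normal ∧ (Y C 0 t).Normal ∧
    Nonempty ((↥(Branch C t) ⧸ X C 0 t) ≃* State C t) ∧
    Nonempty ((↥(Branch C t) ⧸ Y C 0 t) ≃* State C (t + 1)) ∧
    Nonempty ((↥(Branch C t) ⧸ Y C 0 t) ≃* (↥(Branch C (t + 1)) ⧸ X C 0 (t + 1))) :=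
  ⟨X_normal C 0 t, Y_normal C 0 t, ⟨quotientXEquivState C t⟩, ⟨quotientYEquivState C t⟩,
    ⟨(quotientYEquivState C t).trans (quotientXEquivState C (t + 1)).symm⟩⟩

end GroupSystemPaper
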